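/- If x is a uniformly distributed random variable in [0,1)^{2N−1} (Lebesgue measure), then S(x) is uniformly distributed on S^{2N−1}; that is, the pushforward of Lebesgue measure on [0,1)^{2N−1} under Sibuya's map S is the normalized uniform (surface) measure on S^{2N−1}. -/

import Mathlib

/-!
By the Box–Muller transform, a standard Gaussian vector of `ℝ^(2N)` consists of `N` points of the
plane whose squared radii `s` are independent exponential variables and whose angles are
independent and uniform. Radial normalization keeps the angles and replaces `s` by `s / ∑ sᵢ`.
Sibuya's map has the same shape, with the spacings of sorted uniform points in place of `s / ∑ sᵢ`,
so only these two weight vectors have to be compared. Both are distributed as the spacings of a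
uniform point of the order simplex `0 < v₀ < ⋯ < v_{m-1} < 1`, where `m = N - 1`: sorting folds the
`m!` congruent pieces of the cube onto the simplex, and in the coordinates `x = t • spacings v` of
the positive orthant Lebesgue measure is `t ^ m dt dv`, while the density of the exponential vector
depends on `t` alone.
-/

open MeasureTheory ProbabilityTheory

noncomputable section

/-- Cumulative order statistics for Sibuya's map: `ys x 0 = 0`, `ys x N = 1`, and for
`1 ≤ k ≤ N−1`, `ys x k` is the `k`-th smallest among the last `N−1` coordinates of `x`. -/
def sibuyaYs (N : ℕ) (x : Fin (2 * N - 1) → ℝ) (k : ℕ) : ℝ :=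
  if k = 0 then 0
  else if N ≤ k then 1
  else
    let tail : Fin (N - 1) → ℝ := fun i =>
      if h : N + i.val < 2 * N - 1 then x ⟨N + i.val, h⟩ else 0
    if h : k - 1 < N - 1 then tail (Tuple.sort tail ⟨k - 1, h⟩) else 1

/-- Sibuya's map `S : [0,1)^(2N−1) → S^(2N−1)`:
`S(x)_{2i−1} = √(y_i − y_{i−1}) cos(2π x_i)`, `S(x)_{2i} = √(y_i − y_{i−1}) sin(2π x_i)`. -/
def sibuya (N : ℕ) (x : Fin (2 * N - 1) → ℝ) : Fin (2 * N) → ℝ := fun j =>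
  let i := j.val / 2
  let ang := if h : i < 2 * N - 1 then 2 * Real.pi * x ⟨i, h⟩ else 0
  Real.sqrt (sibuyaYs N x (i + 1) - sibuyaYs N x i) *
    (if j.val % 2 = 0 then Real.cos ang else Real.sin ang)

/-- The uniform probability measure on the unit sphere `S^(2N−1) ⊂ ℝ^(2N)`, realized as the
pushforward of the standard Gaussian under radial normalization. -/
def uniformSphere (N : ℕ) : Measure (Fin (2 * N) → ℝ) :=
  Measure.map (fun x => (Real.sqrt (∑ i, x i ^ 2))⁻¹ • x)
    (Measure.pi fun _ => gaussianReal 0 1)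

open scoped ENNReal Real

/-! ### Product measures -/

lemma map_withDensity_comp {α β : Type*} [MeasurableSpace α] [MeasurableSpace β] (μ : Measure α)
    {f : α → β} (hf : Measurable f) {g : β → ℝ≥0∞} (hg : Measurable g) :
    (μ.withDensity (g ∘ f)).map f = (μ.map f).withDensity g := by
  ext s hs
  rw [Measure.map_apply hf hs, withDensity_apply _ (hf hs), withDensity_apply _ hs,
    setLIntegral_map hs hg hf]
  rfl

lemma measurePreserving_comp_equiv {α ι κ : Type*} [MeasurableSpace α] [Fintype ι] [Fintype κ]
    (μ : Measure α) [SigmaFinite μ] (e : ι ≃ κ) :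
    MeasurePreserving (fun v : κ → α ↦ v ∘ e) (Measure.pi fun _ ↦ μ) (Measure.pi fun _ ↦ μ) :=
  (measurePreserving_piCongrLeft (fun _ ↦ μ) e).symm

section ProductMeasures

lemma lintegral_fin_prod_eq_prod {n : ℕ} {α : Fin n → Type*} [∀ i, MeasurableSpace (α i)]
    {μ : ∀ i, Measure (α i)} [∀ i, SigmaFinite (μ i)] {f : ∀ i, α i → ℝ≥0∞}
    (hf : ∀ i, Measurable (f i)) :
    ∫⁻ x, ∏ i, f i (x i) ∂Measure.pi μ = ∏ i, ∫⁻ x, f i x ∂μ i := by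
  induction n with
  | zero => simp
  | succ n ih =>
    calc ∫⁻ x, ∏ i, f i (x i) ∂Measure.pi μ
        = ∫⁻ p, f 0 p.1 * ∏ i : Fin n, f i.succ (p.2 i)
            ∂(μ 0).prod (Measure.pi fun i ↦ μ i.succ) := by
          rw [← (measurePreserving_piFinSuccAbove μ 0).symm.lintegral_comp (by fun_prop)]
          simp only [Fin.prod_univ_succ]
          rfl
      _ = ∏ i, ∫⁻ x, f i x ∂μ i := by
          rw [lintegral_prod_mul (hf 0).aemeasurable
            (g := fun y : ∀ i : Fin n, α i.succ ↦ ∏ i, f i.succ (y i))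
            (Measurable.aemeasurable (by fun_prop)),
            ih fun i ↦ hf i.succ, Fin.prod_univ_succ]

variable {ι : Type*} [Fintype ι] {α : ι → Type*} [∀ i, MeasurableSpace (α i)]
  {μ : ∀ i, Measure (α i)} [∀ i, SigmaFinite (μ i)] {f : ∀ i, α i → ℝ≥0∞}

lemma lintegral_fintype_prod_eq_prod (hf : ∀ i, Measurable (f i)) :
    ∫⁻ x, ∏ i, f i (x i) ∂Measure.pi μ = ∏ i, ∫⁻ x, f i x ∂μ i := by
  let e := (Fintype.equivFin ι).symm
  rw [← (measurePreserving_piCongrLeft μ e).lintegral_comp (by fun_prop)]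
  simp_rw [← e.prod_comp, MeasurableEquiv.coe_piCongrLeft, Equiv.piCongrLeft_apply_apply]
  exact lintegral_fin_prod_eq_prod fun i ↦ hf (e i)

lemma pi_withDensity (hf : ∀ i, Measurable (f i))
    [∀ i, SigmaFinite ((μ i).withDensity (f i))] :
    (Measure.pi fun i ↦ (μ i).withDensity (f i))
      = (Measure.pi μ).withDensity fun x ↦ ∏ i, f i (x i) := by
  refine Measure.pi_eq fun s hs ↦ ?_
  rw [withDensity_apply _ (.univ_pi hs), Measure.restrict_pi_pi, lintegral_fintype_prod_eq_prod hf]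
  exact Finset.prod_congr rfl fun i _ ↦ (withDensity_apply _ (hs i)).symm

end ProductMeasures

/-! ### Order statistics -/

section OrderStatistics

variable {α : Type*} [LinearOrder α] {m : ℕ}

/-- The order statistics of `v`: its entries in increasing order. -/
def sortTuple (v : Fin m → α) : Fin m → α := v ∘ Tuple.sort v

lemma sortTuple_eq_of_monotone_comp {v : Fin m → α} {σ : Equiv.Perm (Fin m)}
    (h : Monotone (v ∘ σ)) : sortTuple v = v ∘ σ :=
  (Tuple.comp_sort_eq_comp_iff_monotone.2 h).symm

lemma strictMono_sortTuple {v : Fin m → α} (hv : Function.Injective v) :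
    StrictMono (sortTuple v) :=
  (Tuple.monotone_sort v).strictMono_of_injective (hv.comp (Tuple.sort v).injective)

lemma pairwise_disjoint_strictMono_comp_perm :
    Pairwise (Function.onFun Disjoint
      fun σ : Equiv.Perm (Fin m) ↦ {v : Fin m → α | StrictMono (v ∘ σ)}) := by
  intro σ τ hne
  refine Set.disjoint_left.2 fun v (hσ : StrictMono (v ∘ σ)) (hτ : StrictMono (v ∘ τ)) ↦ hne ?_
  have hv : Function.Injective v := (Function.Injective.of_comp_iff' v σ.bijective).1 hσ.injective
  have hστ : v ∘ σ = v ∘ τ := (sortTuple_eq_of_monotone_comp hσ.monotone).symm.trans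
    (sortTuple_eq_of_monotone_comp hτ.monotone)
  exact Equiv.ext fun i ↦ hv (congrFun hστ i)

variable [TopologicalSpace α] [OrderClosedTopology α] [SecondCountableTopology α]
  [MeasurableSpace α] [OpensMeasurableSpace α]

lemma measurableSet_sort_eq (σ : Equiv.Perm (Fin m)) :
    MeasurableSet {v : Fin m → α | Tuple.sort v = σ} := by
  have hset : {v : Fin m → α | Tuple.sort v = σ}
      = {v | ∀ i j, i ≤ j → v (σ i) ≤ v (σ j)} ∩
        {v | ∀ i j, i < j → v (σ i) = v (σ j) → σ i < σ j} := by
    ext v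
    exact eq_comm.trans Tuple.eq_sort_iff
  rw [hset]
  measurability

lemma measurable_sortTuple : Measurable (sortTuple : (Fin m → α) → Fin m → α) := by
  let _ : MeasurableSpace (Equiv.Perm (Fin m)) := ⊤
  have hsort : Measurable fun v : Fin m → α ↦ Tuple.sort v :=
    measurable_to_countable' fun σ ↦ measurableSet_sort_eq σ
  have heval : Measurable fun p : (Fin m → α) × Equiv.Perm (Fin m) ↦ p.1 ∘ p.2 :=
    measurable_from_prod_countable_left fun σ ↦
      measurable_pi_lambda _ fun i ↦ measurable_pi_apply (σ i)
  exact heval.comp (measurable_id.prodMk hsort)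

lemma measurableSet_strictMono : MeasurableSet {v : Fin m → α | StrictMono v} := by
  simp only [StrictMono]
  measurability

variable (μ : Measure α) [SigmaFinite μ]

lemma ae_pi_injective [NullSingletonClass μ] :
    ∀ᵐ v ∂Measure.pi fun _ : Fin m ↦ μ, Function.Injective v := by
  have hne (i j : Fin m) (hij : i ≠ j) : ∀ᵐ v ∂Measure.pi fun _ : Fin m ↦ μ, v i ≠ v j := by
    obtain ⟨n, rfl⟩ : ∃ n, m = n + 1 := ⟨m - 1, by have := i.isLt; omega⟩
    obtain ⟨k, rfl⟩ := Fin.exists_succAbove_eq hij.symm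
    have hprod : ∀ᵐ p ∂μ.prod (Measure.pi fun _ : Fin n ↦ μ), p.1 ≠ p.2 k := by
      have hmeas : MeasurableSet {p : α × (Fin n → α) | p.1 ≠ p.2 k} := by measurability
      exact (Measure.ae_prod_iff_ae_ae hmeas).2
        ((Measure.ae_ae_comm hmeas).2 (.of_forall fun w ↦ Measure.ae_ne μ (w k)))
    exact (measurePreserving_piFinSuccAbove (fun _ ↦ μ) i).quasiMeasurePreserving.ae hprod
  simp only [← ae_all_iff] at hne
  filter_upwards [hne] with v hv i j hij
  exact not_not.1 fun h ↦ hv i j h hij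

lemma map_sortTuple_pi [NullSingletonClass μ] :
    (Measure.pi fun _ : Fin m ↦ μ).map sortTuple
      = (m.factorial : ℝ≥0∞) • (Measure.pi fun _ ↦ μ).restrict {v | StrictMono v} := by
  set ν : Measure (Fin m → α) := Measure.pi fun _ ↦ μ
  let E (σ : Equiv.Perm (Fin m)) : Set (Fin m → α) := {v | StrictMono (v ∘ σ)}
  have hperm (σ : Equiv.Perm (Fin m)) : MeasurePreserving (fun v : Fin m → α ↦ v ∘ σ) ν ν :=
    measurePreserving_comp_equiv μ σ
  have hE (σ : Equiv.Perm (Fin m)) : MeasurableSet (E σ) :=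
    (hperm σ).measurable measurableSet_strictMono
  have hcover : ν = Measure.sum fun σ ↦ ν.restrict (E σ) := by
    rw [← Measure.restrict_iUnion pairwise_disjoint_strictMono_comp_perm hE,
      Measure.restrict_eq_self_of_ae_mem]
    filter_upwards [ae_pi_injective μ] with v hv
    exact Set.mem_iUnion.2 ⟨Tuple.sort v, strictMono_sortTuple hv⟩
  have hpiece (σ : Equiv.Perm (Fin m)) :
      (ν.restrict (E σ)).map sortTuple = ν.restrict {v | StrictMono v} := by
    rw [← ((hperm σ).restrict_preimage measurableSet_strictMono).map_eq]
    refine Measure.map_congr ((ae_restrict_iff' (hE σ)).2 (.of_forall fun v hv ↦ ?_))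
    exact sortTuple_eq_of_monotone_comp (StrictMono.monotone hv)
  rw [hcover, Measure.map_sum measurable_sortTuple.aemeasurable, Measure.sum_fintype, ← hcover]
  simp only [hpiece, Finset.sum_const, Finset.card_univ, Fintype.card_perm, Fintype.card_fin,
    Nat.cast_smul_eq_nsmul]

end OrderStatistics

/-! ### Gamma and exponential laws -/

lemma gammaMeasure_eq_withDensity_restrict_Ioi (a r : ℝ) :
    gammaMeasure a r = (volume.restrict (Set.Ioi 0)).withDensity (gammaPDF a r) := by
  rw [← withDensity_indicator measurableSet_Ioi]
  refine withDensity_congr_ae ?_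
  filter_upwards [Measure.ae_ne volume (0 : ℝ)] with x hx
  rcases hx.lt_or_gt with hneg | hpos
  · simp [gammaPDF_of_neg hneg, hneg.le]
  · exact (Set.indicator_of_mem hpos _).symm

lemma ae_gammaMeasure_pos (a r : ℝ) : ∀ᵐ x ∂gammaMeasure a r, 0 < x := by
  rw [gammaMeasure_eq_withDensity_restrict_Ioi]
  exact (withDensity_absolutelyContinuous _ _).ae_le (ae_restrict_mem measurableSet_Ioi)

lemma expMeasure_eq_withDensity (r : ℝ) :
    expMeasure r = (volume.restrict (Set.Ioi 0)).withDensity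
      fun x ↦ ENNReal.ofReal (r * Real.exp (-(r * x))) := by
  rw [expMeasure, gammaMeasure_eq_withDensity_restrict_Ioi]
  refine withDensity_congr_ae ((ae_restrict_iff' measurableSet_Ioi).2 (.of_forall fun x hx ↦ ?_))
  rw [gammaPDF_of_nonneg (le_of_lt hx), Real.rpow_one, Real.Gamma_one, sub_self, Real.rpow_zero,
    div_one, mul_one]

lemma pi_expMeasure {n : ℕ} {r : ℝ} (hr : 0 < r) :
    (Measure.pi fun _ : Fin n ↦ expMeasure r)
      = (volume.restrict (Set.univ.pi fun _ ↦ Set.Ioi 0)).withDensity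
        fun x ↦ ENNReal.ofReal (r ^ n * Real.exp (-(r * ∑ i, x i))) := by
  have _ : IsProbabilityMeasure ((volume.restrict (Set.Ioi 0)).withDensity
      fun x ↦ ENNReal.ofReal (r * Real.exp (-(r * x)))) :=
    expMeasure_eq_withDensity r ▸ isProbabilityMeasure_expMeasure hr
  simp only [expMeasure_eq_withDensity]
  rw [pi_withDensity fun _ ↦ by fun_prop, volume_pi, Measure.restrict_pi_pi]
  congr with x
  rw [← ENNReal.ofReal_prod_of_nonneg fun i _ ↦ by positivity, Finset.prod_mul_distrib,
    Finset.prod_const, Finset.card_univ, Fintype.card_fin, ← Real.exp_sum, Finset.sum_neg_distrib,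
    Finset.mul_sum]

/-- The uniform probability measure on `[0, 1)`. -/
abbrev uniformMeasure : Measure ℝ := volume.restrict (Set.Ico 0 1)

instance : IsProbabilityMeasure uniformMeasure := ⟨by simp⟩

/-! ### The Box–Muller transform -/

/-- The point of the plane with squared radius `p.1` and angle `2 * π * p.2`. -/
def polarPoint (p : ℝ × ℝ) : ℝ × ℝ :=
  (√p.1 * Real.cos (2 * π * p.2), √p.1 * Real.sin (2 * π * p.2))

lemma measurable_polarPoint : Measurable polarPoint := by
  unfold polarPoint; fun_prop

lemma polarPoint_fst_sq_add_snd_sq {s : ℝ} (hs : 0 ≤ s) (u : ℝ) :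
    (polarPoint (s, u)).1 ^ 2 + (polarPoint (s, u)).2 ^ 2 = s := by
  simp only [polarPoint, mul_pow, Real.sq_sqrt hs, ← mul_add, Real.cos_sq_add_sin_sq, mul_one]

lemma setLIntegral_Ioc_eq_of_periodic {T : ℝ} (hT : 0 < T) {g : ℝ → ℝ≥0∞}
    (hg : Function.Periodic g T) (a b : ℝ) :
    ∫⁻ x in Set.Ioc a (a + T), g x = ∫⁻ x in Set.Ioc b (b + T), g x := by
  have : Fact (0 < T) := ⟨hT⟩
  exact (AddCircle.lintegral_preimage T a hg.lift).trans
    (AddCircle.lintegral_preimage T b hg.lift).symm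

lemma setLIntegral_Ioo_neg_pi_pi {g : ℝ → ℝ≥0∞} (hg : Function.Periodic g (2 * π)) :
    ∫⁻ θ in Set.Ioo (-π) π, g θ
      = ENNReal.ofReal (2 * π) * ∫⁻ u in Set.Ico 0 1, g (2 * π * u) := by
  have himage : (2 * π * ·) '' Set.Ico (0 : ℝ) 1 = Set.Ico 0 (2 * π) := by
    rw [Set.image_mul_left_Ico Real.two_pi_pos, mul_zero, mul_one]
  calc ∫⁻ θ in Set.Ioo (-π) π, g θ
      = ∫⁻ θ in Set.Ioc (-π) (-π + 2 * π), g θ := by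
        rw [setLIntegral_congr Ioo_ae_eq_Ioc]; ring_nf
    _ = ∫⁻ θ in Set.Ico 0 (2 * π), g θ := by
        rw [setLIntegral_Ioc_eq_of_periodic Real.two_pi_pos hg (-π) 0, zero_add,
          setLIntegral_congr Ico_ae_eq_Ioc]
    _ = ENNReal.ofReal (2 * π) * ∫⁻ u in Set.Ico 0 1, g (2 * π * u) := by
        rw [← himage, lintegral_image_eq_lintegral_abs_deriv_mul measurableSet_Ico
          (fun u _ ↦ (hasDerivAt_const_mul (2 * π)).hasDerivWithinAt)
          (mul_right_injective₀ Real.two_pi_pos.ne').injOn, abs_of_pos Real.two_pi_pos,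
          lintegral_const_mul' _ _ ENNReal.ofReal_ne_top]

lemma setLIntegral_Ioi_comp_sqrt (g : ℝ → ℝ≥0∞) :
    ∫⁻ r in Set.Ioi 0, ENNReal.ofReal (2 * r) * g r = ∫⁻ s in Set.Ioi 0, g √s := by
  have himage : (· ^ 2) '' Set.Ioi (0 : ℝ) = Set.Ioi 0 := by
    ext s
    refine ⟨?_, fun hs ↦ ⟨√s, Real.sqrt_pos.2 hs, Real.sq_sqrt (le_of_lt hs)⟩⟩
    rintro ⟨r, hr, rfl⟩
    exact Set.mem_Ioi.2 (pow_pos (Set.mem_Ioi.1 hr) 2)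
  have hinj : Set.InjOn (· ^ 2) (Set.Ioi (0 : ℝ)) := fun r hr r' hr' h ↦
    (sq_eq_sq₀ (le_of_lt hr) (le_of_lt hr')).1 h
  conv_rhs => rw [← himage]
  rw [lintegral_image_eq_lintegral_abs_deriv_mul measurableSet_Ioi
    (fun r _ ↦ by simpa using (hasDerivAt_pow 2 r).hasDerivWithinAt) hinj]
  refine setLIntegral_congr_fun measurableSet_Ioi fun r (hr : 0 < r) ↦ ?_
  rw [Real.sqrt_sq hr.le, abs_of_pos (by positivity)]

lemma lintegral_eq_lintegral_polar {f : ℝ × ℝ → ℝ≥0∞} (hf : Measurable f) :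
    ∫⁻ z, f z = ∫⁻ r in Set.Ioi 0, ENNReal.ofReal r *
      ∫⁻ θ in Set.Ioo (-π) π, f (r * Real.cos θ, r * Real.sin θ) := by
  have hmeas : Measurable fun p : ℝ × ℝ ↦
      ENNReal.ofReal p.1 * f (p.1 * Real.cos p.2, p.1 * Real.sin p.2) := by fun_prop
  rw [← lintegral_comp_polarCoord_symm, polarCoord_target, Measure.volume_eq_prod,
    ← Measure.prod_restrict]
  simp only [polarCoord_symm_apply, smul_eq_mul]
  rw [lintegral_prod _ hmeas.aemeasurable]
  simp only [lintegral_const_mul' _ _ ENNReal.ofReal_ne_top]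

lemma smul_map_polarPoint :
    ENNReal.ofReal π • ((volume.restrict (Set.Ioi 0)).prod uniformMeasure).map polarPoint
      = volume := by
  have hpolar := measurable_polarPoint
  refine Measure.ext_of_lintegral _ fun f hf ↦ Eq.symm ?_
  have hangle (r : ℝ) : ∫⁻ θ in Set.Ioo (-π) π, f (r * Real.cos θ, r * Real.sin θ)
      = ENNReal.ofReal (2 * π) *
        ∫⁻ u in Set.Ico 0 1, f (r * Real.cos (2 * π * u), r * Real.sin (2 * π * u)) :=
    setLIntegral_Ioo_neg_pi_pi fun θ ↦ by simp only [Real.cos_add_two_pi, Real.sin_add_two_pi]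
  calc ∫⁻ z, f z
      = ∫⁻ r in Set.Ioi 0, ENNReal.ofReal π * (ENNReal.ofReal (2 * r) *
          ∫⁻ u in Set.Ico 0 1, f (r * Real.cos (2 * π * u), r * Real.sin (2 * π * u))) := by
        rw [lintegral_eq_lintegral_polar hf]
        refine lintegral_congr fun r ↦ ?_
        rw [hangle, ← mul_assoc, ← mul_assoc, ← ENNReal.ofReal_mul' (by positivity),
          ← ENNReal.ofReal_mul (by positivity)]
        ring_nf
    _ = ENNReal.ofReal π * ∫⁻ s in Set.Ioi 0, ∫⁻ u in Set.Ico 0 1, f (polarPoint (s, u)) := by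
        rw [lintegral_const_mul' _ _ ENNReal.ofReal_ne_top, setLIntegral_Ioi_comp_sqrt]
        rfl
    _ = ∫⁻ z, f z ∂(ENNReal.ofReal π •
          ((volume.restrict (Set.Ioi 0)).prod uniformMeasure).map polarPoint) := by
        rw [lintegral_smul_measure, lintegral_map hf hpolar, lintegral_prod _ (by fun_prop),
          smul_eq_mul]

lemma gaussianPDF_mul_gaussianPDF (x y : ℝ) :
    gaussianPDF 0 1 x * gaussianPDF 0 1 y
      = ENNReal.ofReal ((2 * π)⁻¹ * Real.exp (-((x ^ 2 + y ^ 2) / 2))) := by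
  rw [gaussianPDF, gaussianPDF, ← ENNReal.ofReal_mul (gaussianPDFReal_nonneg _ _ _)]
  simp only [gaussianPDFReal, NNReal.coe_one, mul_one, sub_zero]
  rw [mul_mul_mul_comm, ← Real.exp_add, ← mul_inv, Real.mul_self_sqrt (by positivity)]
  ring_nf

theorem map_polarPoint_expMeasure :
    ((expMeasure 2⁻¹).prod uniformMeasure).map polarPoint
      = (gaussianReal 0 1).prod (gaussianReal 0 1) := by
  let density (z : ℝ × ℝ) : ℝ≥0∞ :=
    ENNReal.ofReal π * (gaussianPDF 0 1 z.1 * gaussianPDF 0 1 z.2)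
  have hdensity : Measurable density := by fun_prop
  have hgauss : (gaussianReal 0 1).prod (gaussianReal 0 1)
      = (((volume.restrict (Set.Ioi 0)).prod uniformMeasure).map polarPoint).withDensity
        density := by
    rw [gaussianReal_of_var_ne_zero _ one_ne_zero, prod_withDensity (by fun_prop) (by fun_prop),
      ← Measure.volume_eq_prod, ← smul_map_polarPoint, withDensity_smul_measure,
      ← withDensity_smul _ (by fun_prop)]
    rfl
  rw [hgauss, ← map_withDensity_comp _ measurable_polarPoint hdensity, expMeasure_eq_withDensity,
    prod_withDensity_left (by fun_prop)]
  congr 1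
  refine withDensity_congr_ae ?_
  filter_upwards [Measure.quasiMeasurePreserving_fst.ae (ae_restrict_mem measurableSet_Ioi)]
    with ⟨s, u⟩ (hs : 0 < s)
  simp only [density, Function.comp_apply, gaussianPDF_mul_gaussianPDF,
    polarPoint_fst_sq_add_snd_sq hs.le, ← ENNReal.ofReal_mul Real.pi_nonneg]
  congr 1
  field_simp

/-! ### Spacings -/

section Gaps

/-- The linear map `y ↦ (y₀, y₁ - y₀, …, yₘ - yₘ₋₁)` of consecutive differences; `Fin.cons 0`
supplies the predecessor `0` of `y₀`. -/
def gaps (m : ℕ) : (Fin (m + 1) → ℝ) →ₗ[ℝ] (Fin (m + 1) → ℝ) where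
  toFun y i := y i - (Fin.cons 0 y : Fin (m + 2) → ℝ) i.castSucc
  map_add' y z := by
    ext i
    cases i using Fin.cases with
    | zero => simp
    | succ i => simp only [← Fin.succ_castSucc, Fin.cons_succ, Pi.add_apply]; ring
  map_smul' c y := by
    ext i
    cases i using Fin.cases with
    | zero => simp
    | succ i =>
      simp only [← Fin.succ_castSucc, Fin.cons_succ, Pi.smul_apply, smul_eq_mul, RingHom.id_apply]
      ring

variable {m : ℕ}

lemma gaps_zero (y : Fin (m + 1) → ℝ) : gaps m y 0 = y 0 := by
  simp [gaps]

lemma gaps_succ (y : Fin (m + 1) → ℝ) (i : Fin m) :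
    gaps m y i.succ = y i.succ - y i.castSucc := rfl

lemma sum_gaps (y : Fin (m + 1) → ℝ) : ∑ i, gaps m y i = y (Fin.last m) := by
  have hlast := Fin.sum_univ_castSucc (Fin.cons 0 y : Fin (m + 2) → ℝ)
  have hfirst := Fin.sum_univ_succ (Fin.cons 0 y : Fin (m + 2) → ℝ)
  simp only [Fin.cons_succ, Fin.cons_zero, ← Fin.succ_last] at hlast hfirst
  simp only [gaps, LinearMap.coe_mk, AddHom.coe_mk, Finset.sum_sub_distrib]
  linarith

lemma det_gaps : LinearMap.det (gaps m) = 1 := by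
  have hlower : (LinearMap.toMatrix' (gaps m)).IsLowerTriangular := by
    intro i j (hij : i < j)
    cases i using Fin.cases with
    | zero => simp [LinearMap.toMatrix'_apply, gaps_zero, hij.ne]
    | succ i =>
      have : i.castSucc < j := i.castSucc_lt_succ.trans hij
      simp [LinearMap.toMatrix'_apply, gaps_succ, hij.ne, this.ne]
  rw [← LinearMap.det_toMatrix', Matrix.det_of_isLowerTriangular _ hlower]
  refine Finset.prod_eq_one fun i _ ↦ ?_
  cases i using Fin.cases with
  | zero => simp [LinearMap.toMatrix'_apply, gaps_zero]
  | succ i => simp [LinearMap.toMatrix'_apply, gaps_succ, Fin.castSucc_lt_succ.ne]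

lemma measurable_gaps : Measurable (gaps m) :=
  (LinearMap.continuous_of_finiteDimensional _).measurable

lemma measurePreserving_gaps : MeasurePreserving (gaps m) := by
  refine ⟨measurable_gaps, ?_⟩
  rw [Measure.map_linearMap_addHaar_eq_smul_addHaar _ (by simp [det_gaps]), det_gaps]
  simp

lemma measurePreserving_snoc (m : ℕ) :
    MeasurePreserving fun p : ℝ × (Fin m → ℝ) ↦ (Fin.snoc p.2 p.1 : Fin (m + 1) → ℝ) := by
  convert (volume_preserving_piFinSuccAbove (fun _ : Fin (m + 1) ↦ ℝ) (Fin.last m)).symm using 1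
  ext p : 1
  exact (Fin.insertNth_last' p.1 p.2).symm

/-- The `m + 1` spacings cut out of `[0, 1]` by `v₀ ≤ ⋯ ≤ vₘ₋₁`. -/
def spacings (v : Fin m → ℝ) : Fin (m + 1) → ℝ := gaps m (Fin.snoc v 1)

lemma measurable_spacings : Measurable (spacings (m := m)) :=
  measurable_gaps.comp ((measurePreserving_snoc m).measurable.comp measurable_prodMk_left)

lemma gaps_snoc_smul (t : ℝ) (v : Fin m → ℝ) :
    gaps m (Fin.snoc (t • v) t) = t • spacings v := by
  rw [spacings, ← map_smul]
  congr 1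
  ext i
  cases i using Fin.lastCases <;> simp

lemma sum_smul_spacings (t : ℝ) (v : Fin m → ℝ) : ∑ i, (t • spacings v) i = t := by
  rw [← gaps_snoc_smul, sum_gaps, Fin.snoc_last]

/-- The open order simplex `0 < v₀ < ⋯ < vₘ₋₁ < 1`. -/
def openSimplex (m : ℕ) : Set (Fin m → ℝ) :=
  {v | StrictMono v} ∩ Set.univ.pi fun _ ↦ Set.Ioo 0 1

lemma measurableSet_openSimplex : MeasurableSet (openSimplex m) :=
  measurableSet_strictMono.inter (.univ_pi fun _ ↦ measurableSet_Ioo)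

lemma forall_gaps_pos_iff (y : Fin (m + 1) → ℝ) :
    (∀ i, 0 < gaps m y i) ↔ 0 < y 0 ∧ StrictMono y := by
  simp only [Fin.forall_fin_succ, gaps_zero, gaps_succ, sub_pos, Fin.strictMono_iff_lt_succ]

lemma strictMono_snoc_iff {α : Type*} [Preorder α] {v : Fin m → α} {a : α} :
    StrictMono (Fin.snoc v a : Fin (m + 1) → α) ↔ StrictMono v ∧ ∀ i, v i < a := by
  refine ⟨fun h ↦ ⟨fun i j hij ↦ ?_, fun i ↦ ?_⟩, fun ⟨hv, ha⟩ i j hij ↦ ?_⟩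
  · simpa using h (Fin.castSucc_lt_castSucc_iff.2 hij)
  · simpa using h i.castSucc_lt_last
  · cases i using Fin.lastCases with
    | last => exact absurd hij (Fin.le_last j).not_gt
    | cast i =>
      cases j using Fin.lastCases with
      | last => simpa using ha i
      | cast j => simpa using hv (Fin.castSucc_lt_castSucc_iff.1 hij)

lemma mem_openSimplex_iff (v : Fin m → ℝ) : v ∈ openSimplex m ↔ ∀ i, 0 < spacings v i := by
  rw [spacings, forall_gaps_pos_iff, strictMono_snoc_iff]
  constructor
  · rintro ⟨hv, hIoo⟩
    have hpos (i : Fin (m + 1)) : 0 < (Fin.snoc v 1 : Fin (m + 1) → ℝ) i := by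
      cases i using Fin.lastCases with
      | last => simp
      | cast i => simpa using (hIoo i trivial).1
    exact ⟨hpos 0, hv, fun i ↦ (hIoo i trivial).2⟩
  · rintro ⟨h0, hv, h1⟩
    refine ⟨hv, fun i _ ↦ ⟨h0.trans_le ?_, h1 i⟩⟩
    simpa using (strictMono_snoc_iff.2 ⟨hv, h1⟩).monotone (Fin.zero_le i.castSucc)

lemma lintegral_eq_ofReal_pow_mul_lintegral_smul {t : ℝ} (ht : 0 < t) (f : (Fin m → ℝ) → ℝ≥0∞) :
    ∫⁻ w, f w = ENNReal.ofReal (t ^ m) * ∫⁻ v, f (t • v) := by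
  have hscale : Measure.map (fun v : Fin m → ℝ ↦ t • v) volume
      = ENNReal.ofReal (t ^ m)⁻¹ • volume := by
    rw [Measure.map_addHaar_smul _ ht.ne', Module.finrank_fin_fun, abs_of_pos (by positivity)]
  rw [← (measurableEmbedding_const_smul₀ ht.ne').lintegral_map, hscale, lintegral_smul_measure,
    smul_eq_mul, ← mul_assoc, ← ENNReal.ofReal_mul (by positivity),
    mul_inv_cancel₀ (by positivity), ENNReal.ofReal_one, one_mul]

lemma lintegral_eq_lintegral_gaps_snoc {f : (Fin (m + 1) → ℝ) → ℝ≥0∞} (hf : Measurable f) :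
    ∫⁻ x, f x = ∫⁻ t, ∫⁻ w, f (gaps m (Fin.snoc w t)) := by
  have hmp := measurePreserving_gaps.comp (measurePreserving_snoc m)
  rw [← hmp.lintegral_comp hf, Measure.volume_eq_prod]
  exact lintegral_prod _ (hf.comp hmp.measurable).aemeasurable

lemma setLIntegral_orthant {f : (Fin (m + 1) → ℝ) → ℝ≥0∞} (hf : Measurable f) :
    ∫⁻ x in Set.univ.pi fun _ ↦ Set.Ioi 0, f x
      = ∫⁻ t in Set.Ioi 0, ENNReal.ofReal (t ^ m) *
          ∫⁻ v in openSimplex m, f (t • spacings v) := by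
  set orthant : Set (Fin (m + 1) → ℝ) := Set.univ.pi fun _ ↦ Set.Ioi 0
  have hQ : MeasurableSet orthant := .univ_pi fun _ ↦ measurableSet_Ioi
  have hslice_nonpos {t : ℝ} (ht : t ∉ Set.Ioi 0) (w : Fin m → ℝ) :
      orthant.indicator f (gaps m (Fin.snoc w t)) = 0 := by
    refine Set.indicator_of_notMem (fun hmem ↦ ht ?_) f
    have hsum := Finset.sum_pos (fun i _ ↦ Set.mem_Ioi.1 (hmem i trivial)) Finset.univ_nonempty
    rwa [sum_gaps, Fin.snoc_last] at hsum
  have hslice_pos {t : ℝ} (ht : 0 < t) (v : Fin m → ℝ) :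
      orthant.indicator f (gaps m (Fin.snoc (t • v) t))
        = (openSimplex m).indicator (fun v ↦ f (t • spacings v)) v := by
    have hmem : t • spacings v ∈ orthant ↔ v ∈ openSimplex m := by
      simp [orthant, mem_openSimplex_iff, ht]
    by_cases hv : v ∈ openSimplex m
    · rw [gaps_snoc_smul, Set.indicator_of_mem (hmem.2 hv), Set.indicator_of_mem hv]
    · rw [gaps_snoc_smul, Set.indicator_of_notMem (mt hmem.1 hv), Set.indicator_of_notMem hv]
  rw [← lintegral_indicator hQ, lintegral_eq_lintegral_gaps_snoc (hf.indicator hQ),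
    ← lintegral_indicator measurableSet_Ioi]
  refine lintegral_congr fun t ↦ ?_
  by_cases ht : t ∈ Set.Ioi 0
  · rw [Set.indicator_of_mem ht, ← lintegral_indicator measurableSet_openSimplex,
      lintegral_eq_ofReal_pow_mul_lintegral_smul ht]
    simp only [hslice_pos ht]
  · simp only [Set.indicator_of_notMem ht, hslice_nonpos ht, lintegral_zero]

end Gaps

/-! ### Normalized exponentials -/

section NormalizedExponentials

variable {m : ℕ}

/-- The rescaling of a vector to total mass one. It sends vectors of total mass zero to zero. -/
def normalizeSum {ι : Type*} [Fintype ι] (x : ι → ℝ) : ι → ℝ := (∑ i, x i)⁻¹ • x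

lemma measurable_normalizeSum {ι : Type*} [Fintype ι] :
    Measurable (normalizeSum (ι := ι)) := by
  unfold normalizeSum; fun_prop

lemma normalizeSum_smul_spacings {t : ℝ} (ht : t ≠ 0) (v : Fin m → ℝ) :
    normalizeSum (t • spacings v) = spacings v := by
  rw [normalizeSum, sum_smul_spacings, inv_smul_smul₀ ht]

lemma factorial_mul_gammaPDF {r t : ℝ} (hr : 0 < r) (ht : 0 < t) :
    (m.factorial : ℝ≥0∞) * gammaPDF (m + 1) r t
      = ENNReal.ofReal (t ^ m) * ENNReal.ofReal (r ^ (m + 1) * Real.exp (-(r * t))) := by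
  have hfact : (m.factorial : ℝ) ≠ 0 := by positivity
  rw [gammaPDF_of_nonneg ht.le, Real.Gamma_nat_eq_factorial, add_sub_cancel_right,
    Real.rpow_natCast, ← Nat.cast_succ, Real.rpow_natCast, ← ENNReal.ofReal_natCast,
    ← ENNReal.ofReal_mul (by positivity), ← ENNReal.ofReal_mul (by positivity)]
  congr 1
  field_simp

lemma pi_expMeasure_eq_map_smul_spacings {r : ℝ} (hr : 0 < r) :
    (Measure.pi fun _ : Fin (m + 1) ↦ expMeasure r)
      = ((gammaMeasure (m + 1) r).prod
          ((m.factorial : ℝ≥0∞) • volume.restrict (openSimplex m))).map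
            fun p ↦ p.1 • spacings p.2 := by
  have hspacings := measurable_spacings (m := m)
  refine Measure.ext_of_lintegral _ fun f hf ↦ ?_
  rw [lintegral_map hf (by fun_prop), lintegral_prod _ (by fun_prop),
    gammaMeasure_eq_withDensity_restrict_Ioi, pi_expMeasure hr,
    lintegral_withDensity_eq_lintegral_mul _ (by fun_prop) hf,
    lintegral_withDensity_eq_lintegral_mul₀ (by unfold gammaPDF; fun_prop) (by fun_prop),
    setLIntegral_orthant (by simp only [Pi.mul_def]; fun_prop)]
  refine setLIntegral_congr_fun measurableSet_Ioi fun t (ht : 0 < t) ↦ ?_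
  simp only [Pi.mul_apply, sum_smul_spacings, lintegral_const_mul' _ _ ENNReal.ofReal_ne_top,
    lintegral_smul_measure, smul_eq_mul]
  rw [← mul_assoc, ← factorial_mul_gammaPDF hr ht, mul_comm (m.factorial : ℝ≥0∞), mul_assoc]

theorem map_normalizeSum_pi_expMeasure {r : ℝ} (hr : 0 < r) :
    (Measure.pi fun _ : Fin (m + 1) ↦ expMeasure r).map normalizeSum
      = (m.factorial : ℝ≥0∞) • (volume.restrict (openSimplex m)).map spacings := by
  have hspacings := measurable_spacings (m := m)
  have _ : IsProbabilityMeasure (gammaMeasure (m + 1) r) :=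
    isProbabilityMeasure_gammaMeasure (by positivity) hr
  have hpos : ∀ᵐ p ∂(gammaMeasure (m + 1) r).prod
      ((m.factorial : ℝ≥0∞) • volume.restrict (openSimplex m)), p.1 ≠ 0 :=
    Measure.quasiMeasurePreserving_fst.ae ((ae_gammaMeasure_pos _ _).mono fun _ h ↦ h.ne')
  rw [pi_expMeasure_eq_map_smul_spacings hr, Measure.map_map measurable_normalizeSum (by fun_prop),
    ← Measure.map_smul]
  calc _ = ((gammaMeasure (m + 1) r).prod
          ((m.factorial : ℝ≥0∞) • volume.restrict (openSimplex m))).map (spacings ∘ Prod.snd) :=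
        Measure.map_congr (hpos.mono fun p hp ↦ normalizeSum_smul_spacings hp p.2)
    _ = _ := by
        rw [← Measure.map_map hspacings measurable_snd, Measure.map_snd_prod, measure_univ,
          one_smul]

lemma map_sortTuple_pi_uniformMeasure :
    (Measure.pi fun _ : Fin m ↦ uniformMeasure).map sortTuple
      = (m.factorial : ℝ≥0∞) • volume.restrict (openSimplex m) := by
  have hcube : (Measure.pi fun _ : Fin m ↦ uniformMeasure)
      = volume.restrict (Set.univ.pi fun _ ↦ Set.Ioo 0 1) := by
    simp only [volume_pi, Measure.restrict_pi_pi, uniformMeasure, restrict_Ico_eq_restrict_Ioc,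
      restrict_Ioo_eq_restrict_Ioc]
  rw [map_sortTuple_pi, hcube, Measure.restrict_restrict measurableSet_strictMono, openSimplex]

theorem map_normalizeSum_pi_expMeasure_eq_map_spacings {r : ℝ} (hr : 0 < r) :
    (Measure.pi fun _ : Fin (m + 1) ↦ expMeasure r).map normalizeSum
      = (Measure.pi fun _ : Fin m ↦ uniformMeasure).map (spacings ∘ sortTuple) := by
  rw [map_normalizeSum_pi_expMeasure hr,
    ← Measure.map_map measurable_spacings measurable_sortTuple, map_sortTuple_pi_uniformMeasure,
    Measure.map_smul]

end NormalizedExponentials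

/-! ### Gaussian vectors in polar form -/

section Interleaving

variable {α : Type*} {N : ℕ}

/-- Coordinates of `ℝ^(2N)` as `N` consecutive pairs: `(i, k) ↦ 2 * i + k`. -/
def pairIndexEquiv (N : ℕ) : Fin N × Fin 2 ≃ Fin (2 * N) :=
  finProdFinEquiv.trans (finCongr (mul_comm N 2))

/-- The vector `(w₀.1, w₀.2, w₁.1, w₁.2, …)` listing the entries of a sequence of pairs. -/
def interleave (w : Fin N → α × α) (j : Fin (2 * N)) : α :=
  let p := (pairIndexEquiv N).symm j
  if p.2 = 0 then (w p.1).1 else (w p.1).2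

lemma interleave_pairIndexEquiv_zero (w : Fin N → α × α) (i : Fin N) :
    interleave w (pairIndexEquiv N (i, 0)) = (w i).1 := by
  simp [interleave]

lemma interleave_pairIndexEquiv_one (w : Fin N → α × α) (i : Fin N) :
    interleave w (pairIndexEquiv N (i, 1)) = (w i).2 := by
  simp [interleave]

lemma forall_pairIndexEquiv {P : Fin (2 * N) → Prop} :
    (∀ j, P j) ↔ ∀ i, P (pairIndexEquiv N (i, 0)) ∧ P (pairIndexEquiv N (i, 1)) := by
  simp only [← (pairIndexEquiv N).forall_congr_right, Prod.forall, Fin.forall_fin_two]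

@[to_additive]
lemma prod_pairIndexEquiv {M : Type*} [CommMonoid M] (f : Fin (2 * N) → M) :
    ∏ j, f j = ∏ i, f (pairIndexEquiv N (i, 0)) * f (pairIndexEquiv N (i, 1)) := by
  simp only [← (pairIndexEquiv N).prod_comp, Fintype.prod_prod_type, Fin.prod_univ_two]

variable [MeasurableSpace α]

lemma measurable_interleave : Measurable (interleave : (Fin N → α × α) → Fin (2 * N) → α) := by
  refine measurable_pi_iff.2 (forall_pairIndexEquiv.2 fun i ↦ ?_)
  simp only [interleave_pairIndexEquiv_zero, interleave_pairIndexEquiv_one]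
  exact ⟨by fun_prop, by fun_prop⟩

lemma map_interleave (μ : Measure α) [SigmaFinite μ] :
    (Measure.pi fun _ : Fin N ↦ μ.prod μ).map interleave = Measure.pi fun _ : Fin (2 * N) ↦ μ := by
  refine (Measure.pi_eq fun s hs ↦ ?_).symm
  have hpreimage : interleave ⁻¹' Set.univ.pi s = Set.univ.pi fun i : Fin N ↦
      s (pairIndexEquiv N (i, 0)) ×ˢ s (pairIndexEquiv N (i, 1)) := by
    ext w
    simp only [Set.mem_preimage, Set.mem_univ_pi, Set.mem_prod, forall_pairIndexEquiv,
      interleave_pairIndexEquiv_zero, interleave_pairIndexEquiv_one]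
  rw [Measure.map_apply measurable_interleave (.univ_pi hs), hpreimage, Measure.pi_pi,
    prod_pairIndexEquiv]
  simp only [Measure.prod_prod]

end Interleaving

section PolarVector

variable {N : ℕ}

/-- The vector of `ℝ^(2N)` whose consecutive pairs of coordinates have squared radii `p.1 i` and
angles `2 * π * p.2 i`. -/
def polarVector (p : (Fin N → ℝ) × (Fin N → ℝ)) : Fin (2 * N) → ℝ :=
  interleave fun i ↦ polarPoint (p.1 i, p.2 i)

lemma measurable_polarVector : Measurable (polarVector (N := N)) := by
  have hpolar := measurable_polarPoint
  exact measurable_interleave.comp (by fun_prop)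

lemma sum_polarVector_sq {s : Fin N → ℝ} (hs : 0 ≤ s) (u : Fin N → ℝ) :
    ∑ j, polarVector (s, u) j ^ 2 = ∑ i, s i := by
  simp only [sum_pairIndexEquiv, polarVector, interleave_pairIndexEquiv_zero,
    interleave_pairIndexEquiv_one, polarPoint_fst_sq_add_snd_sq (hs _)]

lemma polarVector_smul {c : ℝ} (hc : 0 ≤ c) (s u : Fin N → ℝ) :
    polarVector (c • s, u) = √c • polarVector (s, u) := by
  refine funext (forall_pairIndexEquiv.2 fun i ↦ ?_)
  simp only [polarVector, Pi.smul_apply, smul_eq_mul, interleave_pairIndexEquiv_zero,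
    interleave_pairIndexEquiv_one, polarPoint, Real.sqrt_mul hc, mul_assoc, and_self]

lemma inv_sqrt_sum_sq_smul_polarVector {s : Fin N → ℝ} (hs : 0 ≤ s) (u : Fin N → ℝ) :
    (√(∑ j, polarVector (s, u) j ^ 2))⁻¹ • polarVector (s, u)
      = polarVector (normalizeSum s, u) := by
  rw [sum_polarVector_sq hs, ← Real.sqrt_inv, normalizeSum,
    polarVector_smul (inv_nonneg.2 (Finset.sum_nonneg fun i _ ↦ hs i))]

lemma map_polarVector_pi_expMeasure :
    ((Measure.pi fun _ : Fin N ↦ expMeasure 2⁻¹).prod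
        (Measure.pi fun _ : Fin N ↦ uniformMeasure)).map polarVector
      = Measure.pi fun _ : Fin (2 * N) ↦ gaussianReal 0 1 := by
  have _ : IsProbabilityMeasure (expMeasure 2⁻¹) := isProbabilityMeasure_expMeasure (by positivity)
  have hpolar := measurable_polarPoint
  have hpairs := measurePreserving_arrowProdEquivProdArrow ℝ ℝ (Fin N)
    (fun _ ↦ expMeasure 2⁻¹) (fun _ ↦ uniformMeasure)
  rw [← map_interleave, ← map_polarPoint_expMeasure, ← hpairs.map_eq,
    ← Measure.pi_map_pi (fun _ ↦ hpolar.aemeasurable),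
    Measure.map_map measurable_polarVector hpairs.measurable,
    Measure.map_map measurable_interleave (by fun_prop)]
  rfl

theorem uniformSphere_eq_map_polarVector :
    uniformSphere N
      = (((Measure.pi fun _ : Fin N ↦ expMeasure 2⁻¹).map normalizeSum).prod
          (Measure.pi fun _ : Fin N ↦ uniformMeasure)).map polarVector := by
  have _ : IsProbabilityMeasure (expMeasure 2⁻¹) := isProbabilityMeasure_expMeasure (by positivity)
  have hnormalize := measurable_normalizeSum (ι := Fin N)
  have hnonneg : ∀ᵐ s ∂Measure.pi fun _ : Fin N ↦ expMeasure 2⁻¹, 0 ≤ s :=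
    ae_all_iff.2 fun i ↦ Measure.tendsto_eval_ae_ae.eventually
      ((ae_gammaMeasure_pos 1 2⁻¹).mono fun _ ↦ le_of_lt)
  rw [uniformSphere, ← map_polarVector_pi_expMeasure,
    Measure.map_map (by fun_prop) measurable_polarVector]
  calc _ = ((Measure.pi fun _ : Fin N ↦ expMeasure 2⁻¹).prod
          (Measure.pi fun _ : Fin N ↦ uniformMeasure)).map
            (polarVector ∘ Prod.map normalizeSum id) :=
        Measure.map_congr <| (Measure.quasiMeasurePreserving_fst.ae hnonneg).mono fun p hp ↦
          inv_sqrt_sum_sq_smul_polarVector hp p.2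
    _ = _ := by
        rw [← Measure.map_map measurable_polarVector (by fun_prop),
          ← Measure.map_prod_map _ _ hnormalize measurable_id, Measure.map_id]

end PolarVector

/-! ### Sibuya's map -/

section Sibuya

variable {m : ℕ}

/-- The coordinates of `ℝ^(2N-1)`, `N = m + 1`, with the last `m` of them on the left and the
first `m + 1` on the right. -/
def coordEquiv (m : ℕ) : Fin m ⊕ Fin (m + 1) ≃ Fin (2 * (m + 1) - 1) :=
  (Equiv.sumComm _ _).trans (finSumFinEquiv.trans (finCongr (by omega)))

/-- The points of `[0, 1]` and the angles that make up the argument of Sibuya's map. -/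
def pointsAndAngles (x : Fin (2 * (m + 1) - 1) → ℝ) : (Fin m → ℝ) × (Fin (m + 1) → ℝ) :=
  ((x ∘ coordEquiv m) ∘ Sum.inl, (x ∘ coordEquiv m) ∘ Sum.inr)

lemma measurePreserving_pointsAndAngles (μ : Measure ℝ) [SigmaFinite μ] :
    MeasurePreserving (pointsAndAngles (m := m)) (Measure.pi fun _ ↦ μ)
      ((Measure.pi fun _ ↦ μ).prod (Measure.pi fun _ ↦ μ)) :=
  (measurePreserving_sumPiEquivProdPi fun _ ↦ μ).comp
    (measurePreserving_comp_equiv μ (coordEquiv m))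

lemma sibuyaYs_zero (N : ℕ) (x : Fin (2 * N - 1) → ℝ) : sibuyaYs N x 0 = 0 := by
  simp [sibuyaYs]

lemma sibuyaYs_succ (x : Fin (2 * (m + 1) - 1) → ℝ) (i : Fin (m + 1)) :
    sibuyaYs (m + 1) x (i + 1)
      = (Fin.snoc (sortTuple (pointsAndAngles x).1) 1 : Fin (m + 1) → ℝ) i := by
  cases i using Fin.lastCases with
  | last => simp [sibuyaYs]
  | cast i =>
    have htail : (fun k : Fin m ↦ if h : m + 1 + k.val < 2 * (m + 1) - 1
        then x ⟨m + 1 + k.val, h⟩ else 0) = (pointsAndAngles x).1 := by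
      ext k
      rw [dif_pos (by omega)]
      rfl
    have hlt : ¬m + 1 ≤ i.val + 1 := by omega
    rw [Fin.snoc_castSucc, ← htail]
    simp [sibuyaYs, sortTuple, hlt]

lemma sibuyaYs_sub_sibuyaYs (x : Fin (2 * (m + 1) - 1) → ℝ) (i : Fin (m + 1)) :
    sibuyaYs (m + 1) x (i + 1) - sibuyaYs (m + 1) x i
      = spacings (sortTuple (pointsAndAngles x).1) i := by
  rw [sibuyaYs_succ, spacings]
  cases i using Fin.cases with
  | zero => rw [gaps_zero, Fin.val_zero, sibuyaYs_zero, sub_zero]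
  | succ i => rw [gaps_succ, Fin.val_succ, ← Fin.val_castSucc, sibuyaYs_succ]

lemma sibuya_eq_polarVector (x : Fin (2 * (m + 1) - 1) → ℝ) :
    sibuya (m + 1) x
      = polarVector (spacings (sortTuple (pointsAndAngles x).1), (pointsAndAngles x).2) := by
  refine funext (forall_pairIndexEquiv.2 fun i ↦ ?_)
  have hval (k : Fin 2) : (pairIndexEquiv (m + 1) (i, k)).val = k + 2 * i := rfl
  have hdiv (k : Fin 2) : (k + 2 * i.val) / 2 = i := by omega
  have hmod (k : Fin 2) : (k + 2 * i.val) % 2 = k := by omega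
  have hangle : i.val < 2 * (m + 1) - 1 := by omega
  have hcoord : (pointsAndAngles x).2 i = x ⟨i, hangle⟩ := rfl
  simp only [sibuya, hval, hdiv, hmod, dif_pos hangle, sibuyaYs_sub_sibuyaYs, polarVector,
    interleave_pairIndexEquiv_zero, interleave_pairIndexEquiv_one, polarPoint, hcoord]
  simp only [Fin.val_zero, Fin.val_one, one_ne_zero, if_true, if_false, and_self]

theorem map_sibuya :
    (volume.restrict (Set.univ.pi fun _ ↦ Set.Ico 0 1)).map (sibuya (m + 1))
      = (((Measure.pi fun _ : Fin m ↦ uniformMeasure).map (spacings ∘ sortTuple)).prod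
          (Measure.pi fun _ : Fin (m + 1) ↦ uniformMeasure)).map polarVector := by
  have hspacings : Measurable (spacings ∘ sortTuple : (Fin m → ℝ) → Fin (m + 1) → ℝ) :=
    measurable_spacings.comp measurable_sortTuple
  have hmap : Measurable (Prod.map (spacings ∘ sortTuple) id :
      (Fin m → ℝ) × (Fin (m + 1) → ℝ) → _) := hspacings.prodMap measurable_id
  have hpoints := measurePreserving_pointsAndAngles (m := m) uniformMeasure
  have hsibuya : sibuya (m + 1)
      = polarVector ∘ Prod.map (spacings ∘ sortTuple) id ∘ pointsAndAngles :=
    funext sibuya_eq_polarVector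
  rw [volume_pi, Measure.restrict_pi_pi, hsibuya,
    ← Measure.map_map measurable_polarVector (hmap.comp hpoints.measurable),
    ← Measure.map_map hmap hpoints.measurable, hpoints.map_eq,
    ← Measure.map_prod_map _ _ hspacings measurable_id, Measure.map_id]

end Sibuya

/-- Sibuya's theorem: the pushforward of Lebesgue measure on `[0,1)^(2N−1)` under `S` is
the uniform probability measure on `S^(2N−1)`. -/
theorem sibuya_map_uniform (N : ℕ) (hN : 1 ≤ N) :
    Measure.map (sibuya N)
        (volume.restrict (Set.univ.pi fun _ : Fin (2 * N - 1) => Set.Ico (0 : ℝ) 1))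
      = uniformSphere N := by
  obtain ⟨m, rfl⟩ : ∃ m, N = m + 1 := ⟨N - 1, by omega⟩
  have hweights : (Measure.pi fun _ ↦ expMeasure 2⁻¹).map normalizeSum
      = (Measure.pi fun _ : Fin m ↦ uniformMeasure).map (spacings ∘ sortTuple) :=
    map_normalizeSum_pi_expMeasure_eq_map_spacings (by positivity)
  rw [map_sibuya, uniformSphere_eq_map_polarVector, hweights]
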